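/- Let x = (3+√5)/2. Then for every finite bipartite graph H with minimum degree at least 1, T̃_H(x,0) · T̃_H(0,x) ≥ 1. -/

import Mathlib

open scoped Classical

/-- The permutation Tutte polynomial of a bipartite graph `G` on finite vertex set `V`
with bipartition class `A` (the other class being `Aᶜ`). -/
noncomputable def permTutte {V : Type*} [Fintype V] [DecidableEq V]
    (G : SimpleGraph V) (A : Set V) (x y : ℝ) : ℝ :=
  ((Fintype.card V).factorial : ℝ)⁻¹ *
    ∑ π : V ≃ Fin (Fintype.card V),
      x ^ Nat.card {i : V // i ∈ A ∧ ∀ j, G.Adj i j → π j < π i} *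
      y ^ Nat.card {j : V // j ∉ A ∧ ∀ i, G.Adj j i → π i < π j}

/-- `G` is bipartite with parts `A` and `Aᶜ`. -/
def IsBipartition {V : Type*} (G : SimpleGraph V) (A : Set V) : Prop :=
  ∀ u v, G.Adj u v → (u ∈ A ↔ v ∉ A)

/-- local factor of the coarse weight -/
noncomputable def phi {V : Type*} (G : SimpleGraph V) (A : Set V) (x : ℝ) {N : ℕ}
    (t : V → Fin N) (v : V) : ℝ :=
  if v ∈ A then (if ∀ j, G.Adj v j → t j < t v then x else 1)
  else (if ∃ j, G.Adj v j ∧ t v < t j then 1 else 0)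

lemma phi_prod_le {V : Type*} [Fintype V] (G : SimpleGraph V) (A : Set V)
    (x x' : ℝ) (hx : 1 ≤ x) (hxx : x ≤ x') {N m : ℕ} (t : V → Fin N) (π : V ≃ Fin m)
    (h : ∀ u v, t u < t v → π u < π v) :
    ∏ v, phi G A x t v ≤ x' ^ Nat.card {i : V // i ∈ A ∧ ∀ j, G.Adj i j → π j < π i} *
      (0:ℝ) ^ Nat.card {j : V // j ∉ A ∧ ∀ i, G.Adj j i → π i < π j} := by
  have key : ∀ (a : ℝ) (p : V → Prop), a ^ Nat.card {i : V // p i} = ∏ v, if p v then a else 1 := by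
    intro a p
    rw [Nat.card_eq_fintype_card, Fintype.card_subtype, Finset.prod_ite]
    simp
  rw [key, key, ← Finset.prod_mul_distrib]
  apply Finset.prod_le_prod
  · intro v _
    unfold phi
    split_ifs <;> linarith
  · intro v _
    unfold phi
    by_cases hv : v ∈ A
    · simp only [hv, if_true, true_and, not_true, false_and, if_false, mul_one]
      by_cases h1 : ∀ j, G.Adj v j → t j < t v
      · have h2 : ∀ j, G.Adj v j → π j < π v := fun j hj => h _ _ (h1 j hj)
        rw [if_pos h1, if_pos h2]; exact hxx
      · rw [if_neg h1]; split_ifs <;> linarith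
    · simp only [hv, if_false, false_and, not_false_eq_true, true_and, one_mul]
      by_cases h1 : ∃ j, G.Adj v j ∧ t v < t j
      · have h2 : ¬ ∀ j, G.Adj v j → π j < π v := by
          obtain ⟨j, hj, hl⟩ := h1
          intro h3
          exact absurd (h _ _ hl) (not_lt.2 (h3 j hj).le)
        rw [if_pos h1, if_neg h2]
      · rw [if_neg h1]; split_ifs <;> norm_num

lemma exists_refine {V : Type*} [Fintype V] {N : ℕ} (t : V → Fin N) :
    ∃ π : V ≃ Fin (Fintype.card V), ∀ u v, t u < t v → π u < π v := by
  let e := Fintype.equivFin V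
  let f := t ∘ e.symm
  refine ⟨e.trans (Tuple.sort f).symm, fun u v huv => ?_⟩
  by_contra hc
  have := Tuple.monotone_sort f (not_lt.1 hc)
  simp [f] at this
  exact absurd huv (not_lt.2 this)

lemma coarse_le {V : Type*} [Fintype V] [DecidableEq V] (G : SimpleGraph V) (A : Set V)
    (x x' : ℝ) (hx : 1 ≤ x) (hxx : x ≤ x') (N : ℕ) (hN : 0 < N) :
    ((N : ℝ) ^ Fintype.card V)⁻¹ * ∑ t : V → Fin N, ∏ v, phi G A x t v ≤ permTutte G A x' 0 := by
  choose π hπ using fun t : V → Fin N => exists_refine t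
  set S := ∑ t : V → Fin N, ∏ v, phi G A x t v with hS
  set F : (V ≃ Fin (Fintype.card V)) → ℝ := fun π =>
    x' ^ Nat.card {i : V // i ∈ A ∧ ∀ j, G.Adj i j → π j < π i} *
      (0:ℝ) ^ Nat.card {j : V // j ∉ A ∧ ∀ i, G.Adj j i → π i < π j} with hF
  have h1 : ∀ σ : Equiv.Perm V, S ≤ ∑ t : V → Fin N, F (σ.trans (π t)) := by
    intro σ
    have : S = ∑ t : V → Fin N, ∏ v, phi G A x (t ∘ σ) v := by
      rw [hS]
      exact (Equiv.sum_comp (Equiv.arrowCongr σ.symm (Equiv.refl (Fin N)))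
        (fun t => ∏ v, phi G A x t v)).symm
    rw [this]
    apply Finset.sum_le_sum
    intro t _
    exact phi_prod_le G A x x' hx hxx _ _ (fun u v huv => hπ t _ _ huv)
  have h2 : ((Fintype.card V).factorial : ℝ) * S ≤ (N:ℝ) ^ Fintype.card V * ∑ p, F p := by
    calc ((Fintype.card V).factorial : ℝ) * S = ∑ σ : Equiv.Perm V, S := by
          simp [Fintype.card_perm]
      _ ≤ ∑ σ : Equiv.Perm V, ∑ t : V → Fin N, F (σ.trans (π t)) :=
          Finset.sum_le_sum (fun σ _ => h1 σ)
      _ = ∑ t : V → Fin N, ∑ σ : Equiv.Perm V, F (σ.trans (π t)) := Finset.sum_comm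
      _ = ∑ t : V → Fin N, ∑ p, F p := by
          refine Finset.sum_congr rfl fun t _ => ?_
          exact Equiv.sum_comp (Equiv.equivCongr (Equiv.refl V) (π t)) F
      _ = _ := by simp
  have hf : (0:ℝ) < (Fintype.card V).factorial := by positivity
  have hn : (0:ℝ) < (N:ℝ) ^ Fintype.card V := by positivity
  unfold permTutte
  change _ ≤ _ * ∑ p, F p
  rw [inv_mul_le_iff₀ hn, ← mul_assoc, mul_comm _ (_)⁻¹, mul_assoc, le_inv_mul_iff₀ hf]
  exact h2

lemma prod_modular {V : Type*} [Fintype V] {N : ℕ} (p : V → Fin N → ℝ) (a b : V → Fin N) :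
    (∏ v, p v (a v)) * (∏ v, p v (b v)) = (∏ v, p v ((a ⊓ b) v)) * ∏ v, p v ((a ⊔ b) v) := by
  rw [← Finset.prod_mul_distrib, ← Finset.prod_mul_distrib]
  refine Finset.prod_congr rfl fun v _ => ?_
  rcases le_total (a v) (b v) with h | h
  · simp [h]
  · simp [h, mul_comm]

/-- twisted monotonicity -/
def TMono {V : Type*} (A : Set V) {N : ℕ} (f : (V → Fin N) → ℝ) : Prop :=
  ∀ t t' : V → Fin N, (∀ v ∈ A, t v ≤ t' v) → (∀ v ∉ A, t' v ≤ t v) → f t ≤ f t'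

noncomputable def twist {V : Type*} (A : Set V) (N : ℕ) : (V → Fin N) ≃ (V → Fin N) where
  toFun t v := if v ∈ A then t v else (t v).rev
  invFun t v := if v ∈ A then t v else (t v).rev
  left_inv t := by ext v; by_cases h : v ∈ A <;> simp [h]
  right_inv t := by ext v; by_cases h : v ∈ A <;> simp [h]

lemma TMono.twist {V : Type*} {A : Set V} {N : ℕ} {f : (V → Fin N) → ℝ} (hf : TMono A f) :
    Monotone (fun t => f (twist A N t)) := by
  intro a b hab
  apply hf
  · intro v hv; simpa [_root_.twist, hv] using hab v
  · intro v hv; simpa [_root_.twist, hv] using hab v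

lemma harris2 {V : Type*} [Fintype V] [DecidableEq V] (A : Set V) {N : ℕ} (p : V → Fin N → ℝ)
    (hp : ∀ v s, 0 ≤ p v s) (hp1 : ∀ v, ∑ s, p v s = 1) (f g : (V → Fin N) → ℝ)
    (hf0 : ∀ t, 0 ≤ f t) (hg0 : ∀ t, 0 ≤ g t) (hf : TMono A f) (hg : TMono A g) :
    (∑ t, (∏ v, p v (t v)) * f t) * (∑ t, (∏ v, p v (t v)) * g t) ≤
      ∑ t, (∏ v, p v (t v)) * (f t * g t) := by
  let q : V → Fin N → ℝ := fun v s => p v (if v ∈ A then s else s.rev)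
  have hq : ∀ t, ∏ v, q v (t v) = ∏ v, p v (twist A N t v) := fun t => rfl
  have hone : ∑ t : V → Fin N, (∏ v, q v (t v)) = 1 := by
    simp_rw [hq]
    rw [Equiv.sum_comp (twist A N) (fun t => ∏ v, p v (t v)), ← Fintype.prod_sum]
    simp [hp1]
  have := fkg (μ := fun t : V → Fin N => ∏ v, q v (t v)) (f := fun t => f (twist A N t))
    (g := fun t => g (twist A N t))
    (fun t => Finset.prod_nonneg fun v _ => hp _ _) (fun t => hf0 _) (fun t => hg0 _)
    hf.twist hg.twist (fun a b => (prod_modular q a b).le)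
  rw [hone, one_mul] at this
  simp_rw [hq] at this
  rwa [Equiv.sum_comp (twist A N) (fun t => (∏ v, p v (t v)) * f t),
    Equiv.sum_comp (twist A N) (fun t => (∏ v, p v (t v)) * g t),
    Equiv.sum_comp (twist A N) (fun t => (∏ v, p v (t v)) * (f t * g t))] at this

lemma TMono.prod {V ι : Type*} {A : Set V} {N : ℕ} (f : ι → (V → Fin N) → ℝ) (S : Finset ι)
    (hf0 : ∀ i ∈ S, ∀ t, 0 ≤ f i t) (hf : ∀ i ∈ S, TMono A (f i)) :
    TMono A (fun t => ∏ i ∈ S, f i t) := by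
  intro t t' h h'
  exact Finset.prod_le_prod (fun i hi => hf0 i hi t) (fun i hi => hf i hi t t' h h')

lemma harris {V ι : Type*} [Fintype V] [DecidableEq V] (A : Set V) {N : ℕ} (p : V → Fin N → ℝ)
    (hp : ∀ v s, 0 ≤ p v s) (hp1 : ∀ v, ∑ s, p v s = 1) (f : ι → (V → Fin N) → ℝ) (S : Finset ι)
    (hf0 : ∀ i ∈ S, ∀ t, 0 ≤ f i t) (hf : ∀ i ∈ S, TMono A (f i)) :
    ∏ i ∈ S, (∑ t, (∏ v, p v (t v)) * f i t) ≤ ∑ t, (∏ v, p v (t v)) * ∏ i ∈ S, f i t := by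
  induction S using Finset.induction_on with
  | empty =>
    simp only [Finset.prod_empty, mul_one]
    rw [← Fintype.prod_sum]; simp [hp1]
  | insert a S ha ih =>
    have h0 : ∀ i ∈ S, ∀ t, 0 ≤ f i t := fun i hi => hf0 i (Finset.mem_insert_of_mem hi)
    have h1 : ∀ i ∈ S, TMono A (f i) := fun i hi => hf i (Finset.mem_insert_of_mem hi)
    simp only [Finset.prod_insert ha]
    refine le_trans ?_ (harris2 A p hp hp1 (f a) (fun t => ∏ i ∈ S, f i t)
      (hf0 a (Finset.mem_insert_self _ _)) (fun t => Finset.prod_nonneg fun i hi => h0 i hi t)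
      (hf a (Finset.mem_insert_self _ _)) (TMono.prod f S h0 h1))
    refine mul_le_mul_of_nonneg_left (ih h0 h1) ?_
    exact Finset.sum_nonneg fun t _ => mul_nonneg (Finset.prod_nonneg fun v _ => hp _ _)
      (hf0 a (Finset.mem_insert_self _ _) t)

lemma expect_prod {V : Type*} [Fintype V] [DecidableEq V] {N : ℕ} (p : V → Fin N → ℝ)
    (hp1 : ∀ v, ∑ s, p v s = 1) (v : V) (S : Finset V) (hv : v ∉ S)
    (g : V → Fin N → Fin N → ℝ) :
    ∑ t : V → Fin N, (∏ w, p w (t w)) * ∏ w ∈ S, g w (t w) (t v) =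
      ∑ s, p v s * ∏ w ∈ S, ∑ r, p w r * g w r s := by
  let q : Fin N → V → Fin N → ℝ := fun s w r =>
    p w r * ((if w = v then (if r = s then 1 else 0) else 1) * (if w ∈ S then g w r s else 1))
  have h1 : ∀ t : V → Fin N, (∏ w, p w (t w)) * ∏ w ∈ S, g w (t w) (t v) =
      ∑ s, ∏ w, q s w (t w) := by
    intro t
    have : ∀ s, ∏ w, q s w (t w) = (∏ w, p w (t w)) * ((if t v = s then 1 else 0) *
        ∏ w ∈ S, g w (t w) s) := by
      intro s
      simp only [q, Finset.prod_mul_distrib]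
      congr 2
      · rw [Finset.prod_ite_eq' Finset.univ v (fun w => if t w = s then (1:ℝ) else 0)]
        simp
      · simp [Finset.prod_ite_mem]
    simp only [this]
    rw [Finset.sum_eq_single (t v)]
    · simp
    · intro b _ hb; rw [if_neg (Ne.symm hb)]; simp
    · simp
  simp_rw [h1]
  rw [Finset.sum_comm]
  refine Finset.sum_congr rfl fun s _ => ?_
  rw [← Fintype.prod_sum]
  have h2 : ∀ w, ∑ r, q s w r = (if w = v then p v s else 1) *
      (if w ∈ S then ∑ r, p w r * g w r s else 1) := by
    intro w
    by_cases hw : w = v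
    · subst hw; simp [q, hv]
    · by_cases hS : w ∈ S
      · simp [q, hw, hS]
      · simp [q, hw, hS, hp1]
  simp only [h2, Finset.prod_mul_distrib]
  congr 1
  · simp
  · simp [Finset.prod_ite_mem]

noncomputable def aFac (k D : ℕ) : ℝ :=
  ∑ s ∈ Finset.range 40, (1/40 : ℝ) * (((s:ℝ)/40)^k +
    (1309/500 - 1) * (((s:ℝ)/40)^k * (((min s 30 : ℕ) : ℝ)/30)^D))

noncomputable def bFac (k D : ℕ) : ℝ :=
  (30/40 : ℝ) * ∑ s ∈ Finset.range 40, (if s < 30 then (1/30 : ℝ) else 0) *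
    ((((s:ℝ) + 1 + 1309/500 * (39 - s))/40)^k - ((((s:ℝ)+1)/40)^k * (((s:ℝ)+1)/40)^D))

lemma pow_mean {ι : Type*} (S : Finset ι) (w z : ι → ℝ) (c : ℝ) (hc : 0 ≤ c)
    (hw : ∀ i ∈ S, 0 ≤ w i) (hz : ∀ i ∈ S, 0 ≤ z i) (h : c * ∑ i ∈ S, w i ≤ ∑ i ∈ S, w i * z i)
    (n : ℕ) : c ^ n * ∑ i ∈ S, w i ≤ ∑ i ∈ S, w i * z i ^ n := by
  induction n with
  | zero => simp
  | succ n ih =>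
    have h1 : ∑ i ∈ S, w i * (c ^ n * z i + c * z i ^ n - c ^ n * c) ≤ ∑ i ∈ S, w i * z i ^ (n+1) := by
      apply Finset.sum_le_sum
      intro i hi
      apply mul_le_mul_of_nonneg_left _ (hw i hi)
      have : 0 ≤ (z i ^ n - c ^ n) * (z i - c) := by
        rcases le_total (z i) c with h | h
        · have := pow_le_pow_left₀ (hz i hi) h n
          nlinarith
        · have := pow_le_pow_left₀ hc h n
          nlinarith
      have e : z i ^ (n+1) = z i ^ n * z i := pow_succ _ _
      rw [e]; nlinarith
    have h2 : ∑ i ∈ S, w i * (c ^ n * z i + c * z i ^ n - c ^ n * c) =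
        c ^ n * ∑ i ∈ S, w i * z i + c * ∑ i ∈ S, w i * z i ^ n - c ^ n * c * ∑ i ∈ S, w i := by
      simp only [Finset.mul_sum, ← Finset.sum_add_distrib, ← Finset.sum_sub_distrib]
      refine Finset.sum_congr rfl fun i _ => by ring
    rw [h2] at h1
    have h3 := mul_le_mul_of_nonneg_left h (pow_nonneg hc n)
    have h4 := mul_le_mul_of_nonneg_left ih hc
    rw [pow_succ]
    linarith

lemma aFac_k (k D : ℕ) : (1/2:ℝ)^k * (8363/10000) ≤ aFac (k+1) D := by
  have h := pow_mean (Finset.range 40)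
    (fun s : ℕ => (1/40 : ℝ) * ((s:ℝ)/40) * (if s < 30 then 1 else 1309/500))
    (fun s : ℕ => (s:ℝ)/40) (1/2) (by norm_num)
    (fun i _ => by split_ifs <;> positivity) (fun i _ => by positivity)
    (by norm_num [Finset.sum_range_succ]) k
  have h2 : (8363/10000 : ℝ) ≤ ∑ s ∈ Finset.range 40,
      (1/40 : ℝ) * ((s:ℝ)/40) * (if s < 30 then 1 else 1309/500) := by
    norm_num [Finset.sum_range_succ]
  refine le_trans (mul_le_mul_of_nonneg_left h2 (by positivity)) (h.trans ?_)
  unfold aFac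
  apply Finset.sum_le_sum
  intro s hs
  split_ifs with h3
  · have : (0:ℝ) ≤ (1309/500 - 1) * (((s:ℝ)/40)^(k+1) * (((min s 30 : ℕ) : ℝ)/30)^D) := by
      norm_num; positivity
    rw [pow_succ]; rw [pow_succ] at this
    linarith
  · have : min s 30 = 30 := by omega
    rw [this]; norm_num
    rw [pow_succ]; linarith

lemma bFac_k (k D : ℕ) : (2:ℝ)^k * (12026/10000) ≤ bFac (k+1) D := by
  have h := pow_mean (Finset.range 30)
    (fun s : ℕ => (1309/500) * (39 - (s:ℝ)) / 40)
    (fun s : ℕ => ((s:ℝ) + 1 + 1309/500 * (39 - s))/40) 2 (by norm_num)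
    (fun i hi => by
      have : (i:ℝ) ≤ 39 := by exact_mod_cast (by simp at hi; omega : i ≤ 39)
      have : (0:ℝ) ≤ 39 - i := by linarith
      positivity)
    (fun i hi => by
      have : (i:ℝ) ≤ 39 := by exact_mod_cast (by simp at hi; omega : i ≤ 39)
      have : (0:ℝ) ≤ 39 - i := by linarith
      positivity)
    (by norm_num [Finset.sum_range_succ]) k
  have h2 : (12026/10000 : ℝ) * 40 ≤ ∑ s ∈ Finset.range 30,
      (1309/500) * (39 - (s:ℝ)) / 40 := by
    norm_num [Finset.sum_range_succ]
  have h3 := (mul_le_mul_of_nonneg_left h2 (by positivity : (0:ℝ) ≤ 2^k)).trans h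
  have h4 : bFac (k+1) D = (1/40 : ℝ) * ∑ s ∈ Finset.range 30,
    ((((s:ℝ) + 1 + 1309/500 * (39 - s))/40)^(k+1) -
      ((((s:ℝ)+1)/40)^(k+1) * (((s:ℝ)+1)/40)^D)) := by
    unfold bFac
    rw [Finset.mul_sum, Finset.mul_sum, ← Finset.sum_subset (Finset.range_mono (by norm_num : 30 ≤ 40))]
    · refine Finset.sum_congr rfl fun s hs => ?_
      rw [if_pos (Finset.mem_range.1 hs)]; ring
    · intro s _ hs
      rw [if_neg (by simpa using hs)]; ring
  have h5 : ∑ s ∈ Finset.range 30, (1309/500) * (39 - (s:ℝ)) / 40 *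
      (((s:ℝ) + 1 + 1309/500 * (39 - s))/40)^k ≤ ∑ s ∈ Finset.range 30,
    ((((s:ℝ) + 1 + 1309/500 * (39 - s))/40)^(k+1) -
      ((((s:ℝ)+1)/40)^(k+1) * (((s:ℝ)+1)/40)^D)) := by
    apply Finset.sum_le_sum
    intro s hs
    have hs' : (s:ℝ) ≤ 29 := by exact_mod_cast (by simp at hs; omega : s ≤ 29)
    set z : ℝ := ((s:ℝ)+1)/40 with hz
    have e1 : ((s:ℝ) + 1 + 1309/500 * (39 - s))/40 = z + 1309/500 * (39 - (s:ℝ)) / 40 := by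
      rw [hz]; ring
    rw [e1]
    set d : ℝ := 1309/500 * (39 - (s:ℝ)) / 40 with hd
    have z0 : 0 ≤ z := by positivity
    have z1 : z ≤ 1 := by rw [hz]; linarith
    have d0 : 0 ≤ d := by rw [hd]; linarith
    have a1 : z ^ (k+1) * z ^ D ≤ z ^ k * z := by
      rw [pow_succ]
      exact mul_le_of_le_one_right (by positivity) (pow_le_one₀ z0 z1)
    have a2 : z ^ k ≤ (z + d) ^ k := pow_le_pow_left₀ z0 (by linarith) k
    have a3 := mul_le_mul_of_nonneg_right a2 z0
    rw [pow_succ (z+d)]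
    nlinarith
  rw [h4]
  linarith

lemma fac_k (k D : ℕ) : 1 ≤ aFac (k+1) D * bFac (k+1) D := by
  have h := mul_le_mul (aFac_k k D) (bFac_k k D) (by positivity)
    (le_trans (by positivity) (aFac_k k D))
  refine le_trans ?_ h
  have : (1/2:ℝ)^k * 2^k = 1 := by rw [← mul_pow]; norm_num
  calc (1:ℝ) ≤ ((1/2:ℝ)^k * 2^k) * (8363/10000 * (12026/10000)) := by rw [this]; norm_num
    _ = _ := by ring

set_option maxHeartbeats 4000000 in
lemma fac_0 (D : ℕ) (hD : 2 ≤ D) : 1 ≤ aFac 0 D * bFac 0 D := by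
  rcases Nat.lt_or_ge D 6 with h | h
  · have ha : ∀ a b c d : ℝ, 0 ≤ a → 0 ≤ b → 1 ≤ a * b → a ≤ c → b ≤ d → 1 ≤ c * d := by
      intro a b c d h1 h2 h3 h4 h5
      exact h3.trans (mul_le_mul h4 h5 h2 (h1.trans h4))
    interval_cases D
    · exact ha 1.7889 0.6022 _ _ (by norm_num) (by norm_num) (by norm_num)
        (by norm_num [aFac, Finset.sum_range_succ]) (by norm_num [bFac, Finset.sum_range_succ])
    · exact ha 1.6 0.65 _ _ (by norm_num) (by norm_num) (by norm_num)
        (by norm_num [aFac, Finset.sum_range_succ]) (by norm_num [bFac, Finset.sum_range_succ])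
    · exact ha 1.55 0.67 _ _ (by norm_num) (by norm_num) (by norm_num)
        (by norm_num [aFac, Finset.sum_range_succ]) (by norm_num [bFac, Finset.sum_range_succ])
    · exact ha 1.5 0.68 _ _ (by norm_num) (by norm_num) (by norm_num)
        (by norm_num [aFac, Finset.sum_range_succ]) (by norm_num [bFac, Finset.sum_range_succ])
  · have ha : (1.4045 : ℝ) ≤ aFac 0 D := by
      calc (1.4045 : ℝ) ≤ ∑ s ∈ Finset.range 40, (1/40:ℝ) * (1 + (1309/500-1) *
            (if s < 30 then 0 else 1)) := by norm_num [Finset.sum_range_succ]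
        _ ≤ _ := by
          unfold aFac
          apply Finset.sum_le_sum
          intro s hs
          split_ifs with h3
          · have : (0:ℝ) ≤ (1309/500 - 1) * (((s:ℝ)/40)^0 * (((min s 30 : ℕ) : ℝ)/30)^D) := by
              norm_num; positivity
            rw [pow_zero] at this ⊢
            linarith
          · have : min s 30 = 30 := by omega
            rw [this]; norm_num
    have hb : (0.7286 : ℝ) ≤ bFac 0 D := by
      calc (0.7286 : ℝ) ≤ bFac 0 6 := by norm_num [bFac, Finset.sum_range_succ]
        _ ≤ _ := by
          unfold bFac
          apply mul_le_mul_of_nonneg_left _ (by norm_num)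
          apply Finset.sum_le_sum
          intro s hs
          apply mul_le_mul_of_nonneg_left _ (by split_ifs <;> norm_num)
          have hs' : (s:ℝ) ≤ 39 := by exact_mod_cast (by simp at hs; omega : s ≤ 39)
          have : (((s:ℝ)+1)/40)^D ≤ (((s:ℝ)+1)/40)^6 :=
            pow_le_pow_of_le_one (by positivity) (by linarith) h
          simp only [pow_zero, one_mul]
          linarith
    nlinarith

lemma fac_ge (k D : ℕ) (h : 1 ≤ k ∨ 2 ≤ D) : 1 ≤ aFac k D * bFac k D := by
  rcases k with _ | k
  · exact fac_0 D (by omega)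
  · exact fac_k k D

lemma aFac_nonneg (k D : ℕ) : 0 ≤ aFac k D := by
  unfold aFac
  apply Finset.sum_nonneg
  intro s _
  norm_num
  positivity

noncomputable def lf {V : Type*} [Fintype V] (G : SimpleGraph V) (L : Set V) (v : V) : Finset V :=
  Finset.univ.filter (fun w => w ∈ L ∧ G.Adj v w)

noncomputable def cn {V : Type*} [Fintype V] (G : SimpleGraph V) (L : Set V) (v : V) : Finset V :=
  Finset.univ.filter (fun w => w ∉ L ∧ G.Adj v w)

noncomputable def nb {V : Type*} [Fintype V] (G : SimpleGraph V) (v : V) : Finset V :=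
  Finset.univ.filter (fun w => G.Adj v w)

lemma prod_nb {V : Type*} [Fintype V] (G : SimpleGraph V) (L : Set V) (v : V) (f : V → ℝ) :
    ∏ w ∈ nb G v, f w = (∏ w ∈ lf G L v, f w) * ∏ w ∈ cn G L v, f w := by
  have h := Finset.prod_filter_mul_prod_filter_not (nb G v) (fun w => w ∈ L) f
  rw [← h]
  congr 2
  · ext w; simp [nb, lf, and_comm]
  · ext w; simp [nb, cn, and_comm]

noncomputable def wt {V : Type*} (A L : Set V) (w : V) (s : Fin 40) : ℝ :=
  if w ∉ A ∧ w ∉ L then (if (s:ℕ) < 30 then 1/30 else 0) else 1/40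

lemma wt_nonneg {V : Type*} (A L : Set V) (w : V) (s : Fin 40) : 0 ≤ wt A L w s := by
  unfold wt; split_ifs <;> norm_num

lemma wt_sum {V : Type*} (A L : Set V) (w : V) : ∑ s, wt A L w s = 1 := by
  unfold wt
  by_cases h : w ∉ A ∧ w ∉ L
  · simp only [h, not_false_eq_true, and_self, if_true]
    rw [Fin.sum_univ_eq_sum_range (fun s => if s < 30 then (1/30:ℝ) else 0) 40]
    norm_num [Finset.sum_range_succ]
  · simp only [h, if_false]; norm_num

lemma sum_fin_lt (n : ℕ) (hn : n ≤ 40) (c d : ℝ) :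
    ∑ r : Fin 40, (if (r:ℕ) < n then c else d) = n * c + (40 - n) * d := by
  rw [Fin.sum_univ_eq_sum_range (fun s => if s < n then c else d) 40]
  have : Finset.range 40 = Finset.range (n + (40 - n)) := by congr 1; omega
  rw [this, Finset.sum_range_add]
  have h1 : ∑ x ∈ Finset.range n, (if x < n then c else d) = n * c := by
    rw [Finset.sum_congr rfl (g := fun _ => c)]
    · simp
    · intro x hx; rw [if_pos (Finset.mem_range.1 hx)]
  rw [h1]
  simp [Nat.cast_sub hn]

lemma wt_lt_leaf {V : Type*} (A L : Set V) (w : V) (h : w ∈ A ∨ w ∈ L) (s : Fin 40) :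
    ∑ r, wt A L w r * (if r < s then (1:ℝ) else 0) = (s:ℝ) / 40 := by
  have h' : ¬ (w ∉ A ∧ w ∉ L) := by tauto
  rw [← Finset.sum_congr rfl (f := fun r : Fin 40 => if (r:ℕ) < s then (1/40:ℝ) else 0),
    sum_fin_lt _ (by omega)]
  · ring
  · intro r _
    simp [wt, h']

lemma wt_lt_core {V : Type*} (A L : Set V) (w : V) (h : w ∉ A) (h2 : w ∉ L) (s : Fin 40) :
    ∑ r, wt A L w r * (if r < s then (1:ℝ) else 0) = ((min (s:ℕ) 30 : ℕ) : ℝ) / 30 := by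
  rw [← Finset.sum_congr rfl (f := fun r : Fin 40 => if (r:ℕ) < min (s:ℕ) 30 then (1/30:ℝ) else 0),
    sum_fin_lt _ (by omega)]
  · ring
  · intro r _
    simp only [wt, h, h2, not_false_eq_true, and_self, if_true, lt_min_iff, Fin.lt_def]
    by_cases a : (r:ℕ) < s <;> by_cases b : (r:ℕ) < 30 <;> simp [a, b]

lemma wt_le {V : Type*} (A L : Set V) (w : V) (h : w ∈ A ∨ w ∈ L) (s : Fin 40) :
    ∑ r, wt A L w r * (if r ≤ s then (1:ℝ) else 0) = ((s:ℝ)+1) / 40 := by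
  have h' : ¬ (w ∉ A ∧ w ∉ L) := by tauto
  rw [← Finset.sum_congr rfl (f := fun r : Fin 40 => if (r:ℕ) < s + 1 then (1/40:ℝ) else 0),
    sum_fin_lt _ (by omega)]
  · push_cast; ring
  · intro r _
    simp [wt, h']

lemma wt_gt {V : Type*} (A L : Set V) (w : V) (h : w ∈ A ∨ w ∈ L) (x : ℝ) (s : Fin 40) :
    ∑ r, wt A L w r * (if s < r then x else 1) = ((s:ℝ) + 1 + x * (39 - s)) / 40 := by
  have h' : ¬ (w ∉ A ∧ w ∉ L) := by tauto
  rw [← Finset.sum_congr rfl (f := fun r : Fin 40 => if (r:ℕ) < s + 1 then (1/40:ℝ) else x/40),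
    sum_fin_lt _ (by omega)]
  · push_cast; ring
  · intro r _
    simp only [wt, h', if_false, Fin.lt_def]
    by_cases a : (s:ℕ) < r
    · rw [if_pos a, if_neg (by omega)]; ring
    · rw [if_neg a, if_pos (by omega)]; ring

lemma phi_nonneg {V : Type*} (G : SimpleGraph V) (A : Set V) (x : ℝ) (hx : 1 ≤ x) {N : ℕ}
    (t : V → Fin N) (v : V) : 0 ≤ phi G A x t v := by
  unfold phi; split_ifs <;> linarith

lemma phi_tmono {V : Type*} (G : SimpleGraph V) (A : Set V) (hbip : IsBipartition G A)
    (x : ℝ) (hx : 1 ≤ x) {N : ℕ} (v : V) :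
    TMono A (fun t : V → Fin N => phi G A x t v) := by
  intro t t' h h'
  unfold phi
  by_cases hv : v ∈ A
  · simp only [hv, if_true]
    by_cases h1 : ∀ j, G.Adj v j → t j < t v
    · have h2 : ∀ j, G.Adj v j → t' j < t' v := fun j hj =>
        lt_of_le_of_lt (h' j ((hbip v j hj).1 hv)) (lt_of_lt_of_le (h1 j hj) (h v hv))
      rw [if_pos h1, if_pos h2]
    · rw [if_neg h1]; split_ifs <;> linarith
  · simp only [hv, if_false]
    by_cases h1 : ∃ j, G.Adj v j ∧ t v < t j
    · obtain ⟨j, hj, hl⟩ := h1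
      have hjA : j ∈ A := by
        have := hbip v j hj; tauto
      have h2 : ∃ j, G.Adj v j ∧ t' v < t' j :=
        ⟨j, hj, lt_of_le_of_lt (h' v hv) (lt_of_lt_of_le hl (h j hjA))⟩
      rw [if_pos h2]; split_ifs <;> norm_num
    · rw [if_neg h1]; split_ifs <;> norm_num

noncomputable def ff {V : Type*} [Fintype V] (G : SimpleGraph V) (A L : Set V) (x : ℝ) {N : ℕ}
    (v : V) (t : V → Fin N) : ℝ :=
  phi G A x t v * ∏ l ∈ lf G L v, phi G A x t l

lemma ff_nonneg {V : Type*} [Fintype V] (G : SimpleGraph V) (A L : Set V) (x : ℝ) (hx : 1 ≤ x)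
    {N : ℕ} (v : V) (t : V → Fin N) : 0 ≤ ff G A L x v t :=
  mul_nonneg (phi_nonneg _ _ _ hx _ _) (Finset.prod_nonneg fun _ _ => phi_nonneg _ _ _ hx _ _)

lemma ff_tmono {V : Type*} [Fintype V] (G : SimpleGraph V) (A L : Set V)
    (hbip : IsBipartition G A) (x : ℝ) (hx : 1 ≤ x) {N : ℕ} (v : V) :
    TMono A (fun t : V → Fin N => ff G A L x v t) := by
  intro t t' h h'
  exact mul_le_mul (phi_tmono G A hbip x hx v t t' h h')
    (Finset.prod_le_prod (fun l _ => phi_nonneg _ _ _ hx _ _)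
      (fun l _ => phi_tmono G A hbip x hx l t t' h h'))
    (Finset.prod_nonneg fun _ _ => phi_nonneg _ _ _ hx _ _) (phi_nonneg _ _ _ hx _ _)

lemma prod_phi {V : Type*} [Fintype V] (G : SimpleGraph V) (A L : Set V)
    (hL : ∀ l ∈ L, ∃ c, c ∉ L ∧ ∀ j, G.Adj l j ↔ j = c) (x : ℝ) {N : ℕ} (t : V → Fin N) :
    ∏ v, phi G A x t v = ∏ v ∈ Finset.univ.filter (fun v => v ∉ L), ff G A L x v t := by
  choose! c hc1 hc2 using hL
  unfold ff
  rw [Finset.prod_mul_distrib]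
  rw [← Finset.prod_filter_mul_prod_filter_not Finset.univ (fun v => v ∉ L)]
  congr 1
  rw [← Finset.prod_fiberwise_of_maps_to (g := c) (t := Finset.univ.filter (fun v => v ∉ L))]
  · refine Finset.prod_congr rfl fun v hv => ?_
    refine Finset.prod_congr ?_ fun _ _ => rfl
    ext w
    simp only [lf, Finset.mem_filter, Finset.mem_univ, true_and, not_not]
    constructor
    · rintro ⟨h1, h2⟩
      exact ⟨h1, ((hc2 w h1 v).2 h2.symm).symm⟩
    · rintro ⟨h1, h2⟩
      exact ⟨h1, ((hc2 w h1 v).1 h2.symm).symm⟩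
  · intro w hw
    simp only [Finset.mem_filter, Finset.mem_univ, true_and, not_not] at hw ⊢
    exact hc1 w hw

lemma prod_ind {V : Type*} (S : Finset V) (P : V → Prop) [DecidablePred P] :
    ∏ w ∈ S, (if P w then (1:ℝ) else 0) = if ∀ w ∈ S, P w then 1 else 0 := by
  rw [Finset.prod_ite_zero]; simp

lemma phi_leaf {V : Type*} [Fintype V] (G : SimpleGraph V) (A L : Set V)
    (hL : ∀ l ∈ L, ∃ c, c ∉ L ∧ ∀ j, G.Adj l j ↔ j = c) (x : ℝ) {N : ℕ} (t : V → Fin N)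
    (v l : V) (hl : l ∈ lf G L v) :
    phi G A x t l = if l ∈ A then (if t v < t l then x else 1) else (if t l < t v then 1 else 0) := by
  simp only [lf, Finset.mem_filter, Finset.mem_univ, true_and] at hl
  obtain ⟨c, -, hc⟩ := hL l hl.1
  have : v = c := (hc v).1 hl.2.symm
  subst this
  unfold phi
  simp [hc]

lemma ff_A {V : Type*} [Fintype V] (G : SimpleGraph V) (A L : Set V) (hbip : IsBipartition G A)
    (hL : ∀ l ∈ L, ∃ c, c ∉ L ∧ ∀ j, G.Adj l j ↔ j = c) (x : ℝ) {N : ℕ} (t : V → Fin N)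
    (v : V) (hv : v ∈ A) :
    ff G A L x v t = ∏ w ∈ lf G L v, (if t w < t v then (1:ℝ) else 0) +
      (x - 1) * ∏ w ∈ nb G v, (if t w < t v then (1:ℝ) else 0) := by
  unfold ff
  have e : ∏ l ∈ lf G L v, phi G A x t l = ∏ w ∈ lf G L v, (if t w < t v then (1:ℝ) else 0) := by
    refine Finset.prod_congr rfl fun l hl => ?_
    rw [phi_leaf G A L hL x t v l hl, if_neg]
    simp only [lf, Finset.mem_filter, Finset.mem_univ, true_and] at hl
    exact (hbip v l hl.2).1 hv
  rw [e, prod_ind, prod_ind]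
  unfold phi
  rw [if_pos hv]
  by_cases h1 : ∀ j, G.Adj v j → t j < t v
  · have h2 : ∀ w ∈ nb G v, t w < t v := fun w hw => h1 w (by simpa [nb] using hw)
    have h3 : ∀ w ∈ lf G L v, t w < t v := fun w hw => h1 w (by simp [lf] at hw; exact hw.2)
    rw [if_pos h1, if_pos h2, if_pos h3]; ring
  · have h2 : ¬ ∀ w ∈ nb G v, t w < t v := fun h => h1 fun w hw => h w (by simpa [nb] using hw)
    rw [if_neg h1, if_neg h2]; ring

lemma ff_B {V : Type*} [Fintype V] (G : SimpleGraph V) (A L : Set V) (hbip : IsBipartition G A)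
    (hL : ∀ l ∈ L, ∃ c, c ∉ L ∧ ∀ j, G.Adj l j ↔ j = c) (x : ℝ) {N : ℕ} (t : V → Fin N)
    (v : V) (hv : v ∉ A) :
    ff G A L x v t = ∏ w ∈ lf G L v, (if t v < t w then x else 1) -
      ∏ w ∈ nb G v, (if t w ≤ t v then (1:ℝ) else 0) := by
  unfold ff
  have e : ∏ l ∈ lf G L v, phi G A x t l = ∏ w ∈ lf G L v, (if t v < t w then x else 1) := by
    refine Finset.prod_congr rfl fun l hl => ?_
    rw [phi_leaf G A L hL x t v l hl, if_pos]
    simp only [lf, Finset.mem_filter, Finset.mem_univ, true_and] at hl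
    have := hbip v l hl.2
    tauto
  rw [e, prod_ind]
  unfold phi
  rw [if_neg hv]
  by_cases h1 : ∃ j, G.Adj v j ∧ t v < t j
  · have h2 : ¬ ∀ w ∈ nb G v, t w ≤ t v := by
      obtain ⟨j, hj, hl⟩ := h1
      exact fun h => absurd (h j (by simpa [nb] using hj)) (not_le.2 hl)
    rw [if_pos h1, if_neg h2]; ring
  · have h2 : ∀ w ∈ nb G v, t w ≤ t v := by
      intro w hw
      by_contra h
      exact h1 ⟨w, by simpa [nb] using hw, not_le.1 h⟩
    have h3 : ∏ w ∈ lf G L v, (if t v < t w then x else 1) = 1 := by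
      apply Finset.prod_eq_one
      intro w hw
      rw [if_neg]
      exact not_lt.2 (h2 w (by simp [lf] at hw; simpa [nb] using hw.2))
    rw [if_neg h1, if_pos h2, h3]; ring

lemma exp_A {V : Type*} [Fintype V] [DecidableEq V] (G : SimpleGraph V) (A L : Set V) (hbip : IsBipartition G A)
    (hL : ∀ l ∈ L, ∃ c, c ∉ L ∧ ∀ j, G.Adj l j ↔ j = c)
    (v : V) (hv : v ∈ A) :
    ∑ t : V → Fin 40, (∏ w, wt A L w (t w)) * ff G A L (1309/500) v t =
      aFac (lf G L v).card (cn G L v).card := by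
  simp_rw [ff_A G A L hbip hL (1309/500) _ v hv, mul_add, Finset.sum_add_distrib,
    mul_left_comm _ ((1309/500 : ℝ) - 1), ← Finset.mul_sum]
  rw [expect_prod (wt A L) (wt_sum A L) v (lf G L v) (by simp [lf])
      (fun _ r s => if r < s then (1:ℝ) else 0),
    expect_prod (wt A L) (wt_sum A L) v (nb G v) (by simp [nb])
      (fun _ r s => if r < s then (1:ℝ) else 0)]
  have h1 : ∀ s : Fin 40, ∏ w ∈ lf G L v, ∑ r, wt A L w r * (if r < s then (1:ℝ) else 0) =
      ((s:ℝ)/40) ^ (lf G L v).card := by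
    intro s
    apply Finset.prod_eq_pow_card
    intro w hw
    exact wt_lt_leaf A L w (Or.inr (by simp [lf] at hw; exact hw.1)) s
  have h2 : ∀ s : Fin 40, ∏ w ∈ cn G L v, ∑ r, wt A L w r * (if r < s then (1:ℝ) else 0) =
      (((min (s:ℕ) 30 : ℕ) : ℝ)/30) ^ (cn G L v).card := by
    intro s
    apply Finset.prod_eq_pow_card
    intro w hw
    simp [cn] at hw
    exact wt_lt_core A L w ((hbip v w hw.2).1 hv) hw.1 s
  simp_rw [prod_nb G L v, h1, h2]
  have h3 : ∀ s, wt A L v s = 1/40 := fun s => by simp [wt, hv]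
  simp_rw [h3]
  rw [aFac, ← Fin.sum_univ_eq_sum_range (fun s => (1/40 : ℝ) * (((s:ℝ)/40)^(lf G L v).card +
    (1309/500 - 1) * (((s:ℝ)/40)^(lf G L v).card * (((min s 30 : ℕ) : ℝ)/30)^(cn G L v).card))) 40,
    Finset.mul_sum, ← Finset.sum_add_distrib]
  refine Finset.sum_congr rfl fun s _ => by ring

lemma exp_B {V : Type*} [Fintype V] [DecidableEq V] (G : SimpleGraph V) (A L : Set V) (hbip : IsBipartition G A)
    (hL : ∀ l ∈ L, ∃ c, c ∉ L ∧ ∀ j, G.Adj l j ↔ j = c)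
    (v : V) (hv : v ∉ A) (hvL : v ∉ L) :
    (30/40 : ℝ) * ∑ t : V → Fin 40, (∏ w, wt A L w (t w)) * ff G A L (1309/500) v t =
      bFac (lf G L v).card (cn G L v).card := by
  simp_rw [ff_B G A L hbip hL (1309/500) _ v hv, mul_sub, Finset.sum_sub_distrib]
  rw [expect_prod (wt A L) (wt_sum A L) v (lf G L v) (by simp [lf])
      (fun _ r s => if s < r then (1309/500:ℝ) else 1),
    expect_prod (wt A L) (wt_sum A L) v (nb G v) (by simp [nb])
      (fun _ r s => if r ≤ s then (1:ℝ) else 0)]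
  have h1 : ∀ s : Fin 40, ∏ w ∈ lf G L v, ∑ r, wt A L w r * (if s < r then (1309/500:ℝ) else 1) =
      (((s:ℝ) + 1 + 1309/500 * (39 - s))/40) ^ (lf G L v).card := by
    intro s
    apply Finset.prod_eq_pow_card
    intro w hw
    exact wt_gt A L w (Or.inr (by simp [lf] at hw; exact hw.1)) _ s
  have h4 : ∀ s : Fin 40, ∏ w ∈ lf G L v, ∑ r, wt A L w r * (if r ≤ s then (1:ℝ) else 0) =
      (((s:ℝ)+1)/40) ^ (lf G L v).card := by
    intro s
    apply Finset.prod_eq_pow_card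
    intro w hw
    exact wt_le A L w (Or.inr (by simp [lf] at hw; exact hw.1)) s
  have h2 : ∀ s : Fin 40, ∏ w ∈ cn G L v, ∑ r, wt A L w r * (if r ≤ s then (1:ℝ) else 0) =
      (((s:ℝ)+1)/40) ^ (cn G L v).card := by
    intro s
    apply Finset.prod_eq_pow_card
    intro w hw
    simp [cn] at hw
    have := hbip v w hw.2
    exact wt_le A L w (by tauto) s
  simp_rw [prod_nb G L v, h1, h2, h4]
  have h3 : ∀ s : Fin 40, wt A L v s = if (s:ℕ) < 30 then (1/30 : ℝ) else 0 :=
    fun s => by simp [wt, hv, hvL]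
  simp_rw [h3]
  rw [bFac, ← Fin.sum_univ_eq_sum_range (fun s => (if s < 30 then (1/30 : ℝ) else 0) *
    ((((s:ℝ) + 1 + 1309/500 * (39 - s))/40)^(lf G L v).card -
      ((((s:ℝ)+1)/40)^(lf G L v).card * (((s:ℝ)+1)/40)^(cn G L v).card))) 40,
    ← Finset.sum_sub_distrib]
  congr 1
  refine Finset.sum_congr rfl fun s _ => by ring

lemma main_lower {V : Type*} [Fintype V] [DecidableEq V] (G : SimpleGraph V) (A L : Set V)
    (hbip : IsBipartition G A)
    (hL : ∀ l ∈ L, ∃ c, c ∉ L ∧ ∀ j, G.Adj l j ↔ j = c) (x' : ℝ) (hx : 1309/500 ≤ x') :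
    ∏ v ∈ Finset.univ.filter (fun v => v ∉ L),
      (if v ∈ A then aFac (lf G L v).card (cn G L v).card
        else bFac (lf G L v).card (cn G L v).card) ≤ permTutte G A x' 0 := by
  refine le_trans ?_ (coarse_le G A (1309/500) x' (by norm_num) hx 40 (by norm_num))
  set C := Finset.univ.filter (fun v => v ∉ L) with hC
  have hh := harris A (wt A L) (wt_nonneg A L) (wt_sum A L)
    (fun v t => ff G A L (1309/500) v t) C
    (fun v _ t => ff_nonneg G A L _ (by norm_num) v t)
    (fun v _ => ff_tmono G A L hbip _ (by norm_num) v)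
  let ρ : V → ℝ := fun v => if v ∉ A ∧ v ∉ L then 30/40 else 1
  have hρ0 : ∀ v, 0 ≤ ρ v := fun v => by simp only [ρ]; split_ifs <;> norm_num
  have hρ : ∏ v, ρ v = ∏ v ∈ C, ρ v := by
    symm
    apply Finset.prod_subset (Finset.subset_univ _)
    intro v _ hv
    simp only [hC, Finset.mem_filter, Finset.mem_univ, true_and] at hv
    simp [ρ, hv]
  have h1 : ∏ v ∈ C, (if v ∈ A then aFac (lf G L v).card (cn G L v).card
        else bFac (lf G L v).card (cn G L v).card) =
      (∏ v, ρ v) * ∏ v ∈ C, ∑ t : V → Fin 40, (∏ w, wt A L w (t w)) * ff G A L (1309/500) v t := by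
    rw [hρ, ← Finset.prod_mul_distrib]
    refine Finset.prod_congr rfl fun v hv => ?_
    simp only [hC, Finset.mem_filter, Finset.mem_univ, true_and] at hv
    by_cases hA : v ∈ A
    · rw [if_pos hA, exp_A G A L hbip hL v hA]; simp [ρ, hA]
    · rw [if_neg hA, ← exp_B G A L hbip hL v hA hv]
      simp only [ρ, hA, hv, not_false_eq_true, and_self, if_true]
  rw [h1]
  refine le_trans (mul_le_mul_of_nonneg_left hh (Finset.prod_nonneg fun v _ => hρ0 v)) ?_
  rw [Finset.mul_sum, Finset.mul_sum]
  apply Finset.sum_le_sum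
  intro t _
  rw [prod_phi G A L hL, ← mul_assoc]
  apply mul_le_mul_of_nonneg_right
  · rw [← Finset.prod_mul_distrib]
    have : (((40:ℕ):ℝ) ^ Fintype.card V)⁻¹ = ∏ v : V, (1/40 : ℝ) := by simp
    rw [this]
    apply Finset.prod_le_prod
    · intro v _; exact mul_nonneg (hρ0 v) (wt_nonneg _ _ _ _)
    · intro v _
      simp only [ρ, wt]
      split_ifs <;> norm_num
  · exact Finset.prod_nonneg fun v _ => ff_nonneg G A L _ (by norm_num) v t

lemma permTutte_swap {V : Type*} [Fintype V] [DecidableEq V] (G : SimpleGraph V) (A : Set V)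
    (x y : ℝ) : permTutte G A x y = permTutte G Aᶜ y x := by
  unfold permTutte
  congr 1
  refine Finset.sum_congr rfl fun π _ => ?_
  rw [mul_comm]
  simp

/-- For `x = (3+√5)/2`, every finite bipartite graph `H` with minimum degree at least `1`
satisfies `T̃_H(x,0) · T̃_H(0,x) ≥ 1`. -/
theorem permTutte_golden_ge_one
    {V : Type*} [Fintype V] [DecidableEq V] (G : SimpleGraph V) [DecidableRel G.Adj]
    (A : Set V) (hbip : IsBipartition G A)
    (hdeg : ∀ v : V, 1 ≤ G.degree v) :
    permTutte G A ((3 + Real.sqrt 5) / 2) 0 * permTutte G A 0 ((3 + Real.sqrt 5) / 2) ≥ 1 := by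
  have hx : (1309/500 : ℝ) ≤ (3 + Real.sqrt 5) / 2 := by
    have : (2.236 : ℝ) ≤ Real.sqrt 5 := Real.le_sqrt_of_sq_le (by norm_num)
    linarith
  have hbip' : IsBipartition G Aᶜ := by
    intro u v h
    have := hbip u v h
    simp only [Set.mem_compl_iff]; tauto
  obtain ⟨L, hLd⟩ : ∃ L : Set V, ∀ v, v ∈ L ↔
      ∃ c, (∀ j, G.Adj v j ↔ j = c) ∧ (v ∈ A ∨ ∃ w, w ≠ v ∧ G.Adj c w) :=
    ⟨{v | ∃ c, (∀ j, G.Adj v j ↔ j = c) ∧ (v ∈ A ∨ ∃ w, w ≠ v ∧ G.Adj c w)}, fun v => Iff.rfl⟩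
  have hL : ∀ l ∈ L, ∃ c, c ∉ L ∧ ∀ j, G.Adj l j ↔ j = c := by
    intro l hl
    obtain ⟨c, hc, h⟩ := (hLd l).1 hl
    refine ⟨c, ?_, hc⟩
    intro hcL
    obtain ⟨d, hd, h'⟩ := (hLd c).1 hcL
    have hlc : G.Adj l c := (hc c).2 rfl
    have hdl : l = d := (hd l).1 hlc.symm
    subst hdl
    have hb := hbip l c hlc
    rcases h with h | ⟨w, hw, hw2⟩
    · rcases h' with h' | ⟨w, hw, hw2⟩
      · tauto
      · exact hw ((hc w).1 hw2)
    · exact hw ((hd w).1 hw2)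
  have h1 := main_lower G A L hbip hL _ hx
  have h2 := main_lower G Aᶜ L hbip' hL _ hx
  rw [permTutte_swap G A 0]
  have hcore : ∀ v, v ∉ L → 1 ≤ aFac (lf G L v).card (cn G L v).card *
      bFac (lf G L v).card (cn G L v).card := by
    intro v hv
    apply fac_ge
    by_contra hcon
    push Not at hcon
    obtain ⟨hk, hD⟩ := hcon
    have hk0 : lf G L v = ∅ := Finset.card_eq_zero.1 (by omega)
    have hno : ∀ w, G.Adj v w → w ∉ L := by
      intro w hw hwL
      have : w ∈ lf G L v := by simp [lf, hw, hwL]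
      rw [hk0] at this; simp at this
    obtain ⟨c, hc⟩ : ∃ c, G.Adj v c := by
      have := hdeg v
      rw [← G.card_neighborFinset_eq_degree] at this
      obtain ⟨c, hc⟩ := Finset.card_pos.1 this
      exact ⟨c, by simpa using hc⟩
    have huniq : ∀ j, G.Adj v j ↔ j = c := by
      intro j
      constructor
      · intro hj
        exact Finset.card_le_one.1 (by omega : (cn G L v).card ≤ 1) j
          (by simp [cn, hj, hno j hj]) c (by simp [cn, hc, hno c hc])
      · rintro rfl; exact hc
    have hvA : v ∉ A := fun h => hv ((hLd v).2 ⟨c, huniq, Or.inl h⟩)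
    have hcw : ∀ w, G.Adj c w ↔ w = v := by
      intro w
      constructor
      · intro hw
        by_contra hne
        exact hv ((hLd v).2 ⟨c, huniq, Or.inr ⟨w, hne, hw⟩⟩)
      · rintro rfl; exact hc.symm
    refine hno c hc ((hLd c).2 ⟨v, hcw, Or.inl ?_⟩)
    have := hbip v c hc
    tauto
  have haf : ∀ v, v ∉ L → 0 ≤ aFac (lf G L v).card (cn G L v).card := fun v _ => aFac_nonneg _ _
  have hbf : ∀ v, v ∉ L → 0 ≤ bFac (lf G L v).card (cn G L v).card := by
    intro v hv
    by_contra hc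
    have := hcore v hv
    nlinarith [mul_nonneg (haf v hv) (neg_nonneg.2 (not_le.1 hc).le)]
  have hn : ∀ B : Set V, 0 ≤ ∏ v ∈ Finset.univ.filter (fun v => v ∉ L),
      (if v ∈ B then aFac (lf G L v).card (cn G L v).card
        else bFac (lf G L v).card (cn G L v).card) := by
    intro B
    apply Finset.prod_nonneg
    intro v hv
    simp only [Finset.mem_filter, Finset.mem_univ, true_and] at hv
    split_ifs
    · exact haf v hv
    · exact hbf v hv
  refine le_trans ?_ (mul_le_mul h1 h2 (hn _) (le_trans (hn _) h1))
  rw [← Finset.prod_mul_distrib]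
  calc (1:ℝ) = ∏ v ∈ Finset.univ.filter (fun v => v ∉ L), (1:ℝ) := by simp
    _ ≤ _ := by
      apply Finset.prod_le_prod
      · intro _ _; norm_num
      · intro v hv
        simp only [Finset.mem_filter, Finset.mem_univ, true_and] at hv
        by_cases hA : v ∈ A
        · simpa [hA] using hcore v hv
        · simpa [hA, mul_comm] using hcore v hv
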